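/- Let C₂ = {1, g} be a group of order 2 and ℤ[C₂] its integral group ring. Let M be a finite ℤ[C₂]-module of odd order, and let N be a finite abelian group regarded as a ℤ[C₂]-module with g acting by multiplication by −1. Then the groups Hom_{ℤ[C₂]}(M, N) and Ext¹_{ℤ[C₂]}(M, N) are both finite and have the same cardinality. -/

import Mathlib

/-!
Write `R = ℤ[C₂]`, let `F → M` be a surjection from a free module of finite rank, with kernel `K`.
A projective resolution of `M` starting with `F` gives the exact sequence
`0 → Hom(M, N) → Hom(F, N) → Hom(K, N) → Ext¹(M, N) → 0`, so
`|Ext¹(M, N)| * |Hom(F, N)| = |Hom(K, N)| * |Hom(M, N)|` (`card_ext_mul`), and it remains to see that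
`|Hom(K, N)| = |Hom(F, N)|` (`card_hom_ker_eq_card_hom`).

As `g` acts by `-1` on `N`, the `R`-action on `N` factors through the sign map `R → ℤ`, `g ↦ -1`,
whose kernel is generated by `1 + g`. Let `σ : F ≅ Rⁿ → ℤⁿ` be the sign map in each coordinate.
If `x ∈ K` and `σ x = 0`, then `x = (1 + g) y` with `y ∈ F`. Write the odd order of `M` as
`e = 2 k + 1`; since `(1 + g)² = 2 (1 + g)`, one has `x = (1 + g) (e y - k x)`, and `e y - k x`
lies in `K`, so every homomorphism `K → N` kills `x`. Hence `Hom_R(K, N) = Hom_ℤ(σ(K), N)`.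
Now `σ(K)` contains `e ℤⁿ`, so it is free of rank `n`, and both sides have `|N|ⁿ` elements.
-/


/-- The integral group ring `ℤ[C₂]` of the group `C₂` of order `2`,
realized as the monoid algebra of `Multiplicative (ZMod 2)` over `ℤ`. -/
abbrev ZC₂ : Type := MonoidAlgebra ℤ (Multiplicative (ZMod 2))

/-- The nontrivial element `g` of `C₂`, viewed inside the group ring `ℤ[C₂]`. -/
noncomputable abbrev gC₂ : ZC₂ :=
  MonoidAlgebra.of ℤ (Multiplicative (ZMod 2)) (Multiplicative.ofAdd (1 : ZMod 2))

open CategoryTheory Limits in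
/-- Every epimorphism `p : F ⟶ Z` from a projective object is the beginning of a projective
resolution of `Z`: splice it with a projective resolution of `kernel p`. -/
theorem exists_projectiveResolution_X_zero_iso {C : Type*} [Category* C] [Abelian C]
    [EnoughProjectives C] {F Z : C} [Projective F] (p : F ⟶ Z) [Epi p] :
    ∃ P : ProjectiveResolution Z, Nonempty (P.complex.X 0 ≅ F) := by
  let Q := ProjectiveResolution.of (kernel p)
  let q : Q.complex.X 0 ⟶ kernel p := Q.π.f 0
  have hq : Epi q := inferInstanceAs (Epi (Q.π.f 0))
  have hdq : Q.complex.d 1 0 ≫ q = 0 := Q.complex_d_comp_π_f_zero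
  have hQ : (ShortComplex.mk _ _ hdq).Exact := Q.exact₀
  let f := q ≫ kernel.ι p
  have w : Q.complex.d 1 0 ≫ f = 0 := by
    rw [← Category.assoc, hdq, zero_comp]
  have hfp : f ≫ p = 0 := by simp [f]
  have ex₁ : (ShortComplex.mk _ _ w).Exact := by
    let α : ShortComplex.mk _ _ hdq ⟶ ShortComplex.mk _ _ w :=
      { τ₁ := 𝟙 _, τ₂ := 𝟙 _, τ₃ := kernel.ι p }
    have : Epi α.τ₁ := inferInstanceAs (Epi (𝟙 _))
    have : IsIso α.τ₂ := inferInstanceAs (IsIso (𝟙 _))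
    have : Mono α.τ₃ := inferInstanceAs (Mono (kernel.ι p))
    exact (ShortComplex.exact_iff_of_epi_of_isIso_of_mono α).1 hQ
  have ex₀ : (ShortComplex.mk _ _ hfp).Exact := by
    let α : ShortComplex.mk _ _ hfp ⟶ ShortComplex.mk _ _ (kernel.condition p) :=
      { τ₁ := q, τ₂ := 𝟙 _, τ₃ := 𝟙 _ }
    have : Epi α.τ₁ := hq
    have : IsIso α.τ₂ := inferInstanceAs (IsIso (𝟙 _))
    have : Mono α.τ₃ := inferInstanceAs (Mono (𝟙 _))
    refine (ShortComplex.exact_iff_of_epi_of_isIso_of_mono α).2 ?_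
    exact ShortComplex.exact_of_f_is_kernel _ (kernelIsKernel p)
  let K := ChainComplex.augment Q.complex f w
  have hproj : ∀ n, Projective (K.X n) := by
    rintro (_ | n)
    · assumption
    · exact Q.projective n
  have hexact : ∀ n, K.ExactAt (n + 1) := by
    intro n
    rw [HomologicalComplex.exactAt_iff' _ (n + 1 + 1) (n + 1) n (by simp) (by simp)]
    match n with
    | 0 => exact ex₁
    | n + 1 => exact Q.exact_succ n
  refine ⟨{ complex := K
            projective := hproj
            π := (ChainComplex.toSingle₀Equiv _ _).symm ⟨p, hfp⟩
            quasiIso := ⟨fun n => ?_⟩ }, ⟨Iso.refl _⟩⟩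
  cases n
  · rw [ChainComplex.quasiIsoAt₀_iff, ShortComplex.quasiIso_iff_of_zeros']
    · refine (ShortComplex.exact_and_epi_g_iff_of_iso ?_).2 ⟨ex₀, inferInstanceAs (Epi p)⟩
      refine ShortComplex.isoMk (Iso.refl _) (Iso.refl _) (Iso.refl _) ?_ ?_
      · exact (Category.id_comp _).trans (Category.comp_id _).symm
      · refine (Category.id_comp _).trans (Eq.trans ?_ (Category.comp_id _).symm)
        exact (ChainComplex.toSingle₀Equiv_symm_apply_f_zero (C := K) p hfp).symm
    all_goals rfl
  · rw [quasiIsoAt_iff_exactAt']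
    · apply hexact
    · apply ChainComplex.exactAt_succ_single_obj

open CategoryTheory in
/-- Counting form of `homology = ker g / range f`. -/
theorem card_mul_homology {R : Type*} [Ring R] (S : ShortComplex (ModuleCat R))
    [Finite (LinearMap.ker S.g.hom)] :
    Finite S.homology ∧
    Nat.card S.homology * Nat.card (LinearMap.range S.f.hom) =
      Nat.card (LinearMap.ker S.g.hom) := by
  have e : S.homology ≃ _ ⧸ LinearMap.range S.moduleCatToCycles :=
    S.moduleCatHomologyIso.toLinearEquiv.toEquiv
  have : Finite (_ ⧸ LinearMap.range S.moduleCatToCycles) :=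
    Finite.of_surjective _ (Submodule.mkQ_surjective _)
  refine ⟨Finite.of_equiv _ e.symm, ?_⟩
  rw [Nat.card_congr e,
    Submodule.card_eq_card_quotient_mul_card (LinearMap.range S.moduleCatToCycles), mul_comm]
  congr 1
  have : LinearMap.range S.f.hom =
      (LinearMap.range S.moduleCatToCycles).map (LinearMap.ker S.g.hom).subtype := by
    rw [← LinearMap.range_comp]; rfl
  rw [this]
  exact (Nat.card_congr (Submodule.equivMapOfInjective _
    (Submodule.injective_subtype _) _).toEquiv).symm

/-- A linear map that vanishes on the kernel of a surjection `d` factors through `d`. -/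
theorem exists_comp_eq_of_ker_le {R A B N : Type*} [Ring R] [AddCommGroup A] [AddCommGroup B]
    [AddCommGroup N] [Module R A] [Module R B] [Module R N] {d : B →ₗ[R] A}
    (hd : Function.Surjective d) (f : B →ₗ[R] N) (hf : ∀ x, d x = 0 → f x = 0) :
    ∃ φ : A →ₗ[R] N, φ ∘ₗ d = f := by
  refine ⟨(LinearMap.ker d).liftQ f hf ∘ₗ (d.quotKerEquivOfSurjective hd).symm, ?_⟩
  ext x
  have : (d.quotKerEquivOfSurjective hd).symm (d x) = (LinearMap.ker d).mkQ x := by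
    rw [LinearEquiv.symm_apply_eq]; rfl
  simp only [LinearMap.comp_apply, LinearEquiv.coe_coe, this]
  rfl

open CategoryTheory in
/-- The cardinality count for the exact sequence
`0 → Hom(M, N) → Hom(P₀, N) → Hom(ker p, N) → Ext¹(M, N) → 0`, where `p : P₀ → M` is the
augmentation of a projective resolution `P` of `M`. It is read off from the complex `Hom(P, N)`:
the kernels of its first two differentials are `Hom(M, N)` and `Hom(ker p, N)`. -/
theorem card_ext_mul {R : Type} [CommRing R] {M N : ModuleCat.{0} R} (P : ProjectiveResolution M)
    (p : P.complex.X 0 →ₗ[R] M) (hp : p = (P.π.f 0).hom)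
    [Finite (P.complex.X 0 →ₗ[R] N)] [Finite (LinearMap.ker p →ₗ[R] N)] :
    Finite ↥(((Ext R (ModuleCat R) 1).obj (Opposite.op M)).obj N) ∧
    Nat.card ↥(((Ext R (ModuleCat R) 1).obj (Opposite.op M)).obj N) *
      Nat.card (P.complex.X 0 →ₗ[R] N) =
    Nat.card (LinearMap.ker p →ₗ[R] N) * Nat.card (M →ₗ[R] N) := by
  have e := (P.isoExt (R := R) 1 N ≪≫
    (P.complex.linearYonedaObj R N).homologyIsoSc' 0 1 2 (by simp) (by simp)).toLinearEquiv.toEquiv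
  set S := (P.complex.linearYonedaObj R N).sc' 0 1 2
  have hps : Function.Surjective p := by
    rw [hp]; exact (ModuleCat.epi_iff_surjective _).1 inferInstance
  have hpd : LinearMap.range (P.complex.d 1 0).hom = LinearMap.ker p := by
    rw [hp]; exact P.exact₀.moduleCat_range_eq_ker
  have hdd : LinearMap.range (P.complex.d 2 1).hom = LinearMap.ker (P.complex.d 1 0).hom :=
    (P.exact_succ 0).moduleCat_range_eq_ker
  have h1 : Nonempty ((LinearMap.ker p →ₗ[R] N) ≃ LinearMap.ker S.g.hom) := by
    let q : P.complex.X 1 →ₗ[R] LinearMap.ker p :=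
      (P.complex.d 1 0).hom.codRestrict _ (fun x => hpd ▸ LinearMap.mem_range_self _ x)
    have hq : Function.Surjective q := by
      rintro ⟨x, hx⟩
      obtain ⟨y, rfl⟩ := hpd.symm ▸ hx
      exact ⟨y, rfl⟩
    have hq0 (x) : q x = 0 ↔ x ∈ LinearMap.range (P.complex.d 2 1).hom := by
      rw [hdd]; exact Subtype.ext_iff
    refine ⟨Equiv.ofBijective (fun φ => ⟨ModuleCat.ofHom (φ ∘ₗ q), ?_⟩) ⟨?_, ?_⟩⟩
    · change P.complex.d 2 1 ≫ _ = 0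
      ext x
      exact (congrArg φ ((hq0 _).2 ⟨x, rfl⟩)).trans (map_zero φ)
    · intro φ ψ h
      exact (LinearMap.cancel_right hq).1 (congrArg ModuleCat.Hom.hom (congrArg Subtype.val h))
    · rintro ⟨(f : P.complex.X 1 ⟶ N), (hf : P.complex.d 2 1 ≫ f = 0)⟩
      obtain ⟨φ, hφ⟩ := exists_comp_eq_of_ker_le hq f.hom (by
        intro x hx
        obtain ⟨y, rfl⟩ := (hq0 x).1 hx
        exact congrArg (fun k => k.hom y) hf)
      exact ⟨φ, Subtype.ext (ModuleCat.hom_ext hφ)⟩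
  have h2 : Nonempty ((M →ₗ[R] N) ≃ LinearMap.ker S.f.hom) := by
    have hp0 (x) : p x = 0 ↔ x ∈ LinearMap.range (P.complex.d 1 0).hom := by
      rw [hpd]; rfl
    refine ⟨Equiv.ofBijective (fun φ => ⟨ModuleCat.ofHom (φ ∘ₗ p), ?_⟩) ⟨?_, ?_⟩⟩
    · change P.complex.d 1 0 ≫ _ = 0
      ext x
      exact (congrArg φ ((hp0 _).2 ⟨x, rfl⟩)).trans (map_zero φ)
    · intro φ ψ h
      exact (LinearMap.cancel_right hps).1 (congrArg ModuleCat.Hom.hom (congrArg Subtype.val h))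
    · rintro ⟨(f : P.complex.X 0 ⟶ N), (hf : P.complex.d 1 0 ≫ f = 0)⟩
      obtain ⟨φ, hφ⟩ := exists_comp_eq_of_ker_le hps f.hom (by
        intro x hx
        obtain ⟨y, rfl⟩ := (hp0 x).1 hx
        exact congrArg (fun k => k.hom y) hf)
      exact ⟨φ, Subtype.ext (ModuleCat.hom_ext hφ)⟩
  obtain ⟨h1⟩ := h1
  obtain ⟨h2⟩ := h2
  have h3 : S.X₁ ≃ (P.complex.X 0 →ₗ[R] N) := ModuleCat.homEquiv
  have : Finite (LinearMap.ker S.g.hom) := Finite.of_equiv _ h1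
  have : Finite S.X₁ := Finite.of_equiv _ h3.symm
  obtain ⟨f1, f2⟩ := card_mul_homology S
  refine ⟨Finite.of_equiv _ e.symm, ?_⟩
  rw [Nat.card_congr e, Nat.card_congr h1, Nat.card_congr h2, ← f2, ← Nat.card_congr h3, mul_assoc,
    Submodule.card_eq_card_quotient_mul_card (LinearMap.ker S.f.hom),
    Nat.card_congr S.f.hom.quotKerEquivRange.toEquiv]
  congr 1
  exact mul_comm _ _

/-- The ring homomorphism `ℤ[C₂] → ℤ` sending `g` to `-1`. -/
noncomputable def signZC₂ : ZC₂ →+* ℤ :=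
  (MonoidAlgebra.lift ℤ ℤ (Multiplicative (ZMod 2))
    { toFun := fun x => if x = 1 then 1 else -1
      map_one' := by decide
      map_mul' := by decide }).toRingHom

theorem signZC₂_gC₂ : signZC₂ gC₂ = -1 := by
  simp [signZC₂]

theorem gC₂_mul_self : gC₂ * gC₂ = 1 := by
  rw [← map_mul, ← map_one (MonoidAlgebra.of ℤ (Multiplicative (ZMod 2)))]
  congr 1

/-- Reduction modulo `1 + g`: the kernel of `signZC₂` is the ideal generated by `1 + g`. -/
theorem exists_eq_signZC₂_add (r : ZC₂) : ∃ s : ZC₂, r = (signZC₂ r : ZC₂) + (1 + gC₂) * s := by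
  induction r using MonoidAlgebra.induction_on with
  | of m =>
    obtain rfl | rfl : m = 1 ∨ m = Multiplicative.ofAdd (1 : ZMod 2) := by revert m; decide
    · exact ⟨0, by rw [map_one, map_one]; simp⟩
    · exact ⟨1, by rw [signZC₂_gC₂]; simp⟩
  | add x y hx hy =>
    obtain ⟨s, hs⟩ := hx
    obtain ⟨t, ht⟩ := hy
    refine ⟨s + t, ?_⟩
    rw [map_add, Int.cast_add]
    linear_combination hs + ht
  | smul c x hx =>
    obtain ⟨s, hs⟩ := hx
    refine ⟨c • s, ?_⟩
    simp only [zsmul_eq_mul, map_mul, map_intCast, Int.cast_mul, Int.cast_id]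
    linear_combination (c : ZC₂) * hs

theorem smul_eq_signZC₂_smul {N : Type*} [AddCommGroup N] [Module ZC₂ N]
    (hN : ∀ n : N, gC₂ • n = -n) (r : ZC₂) (n : N) : r • n = signZC₂ r • n := by
  obtain ⟨s, hs⟩ := exists_eq_signZC₂_add r
  conv_lhs => rw [hs]
  rw [add_smul, mul_comm, mul_smul, add_smul, one_smul, hN, add_neg_cancel, smul_zero, add_zero,
    Int.cast_smul_eq_zsmul]

/-- If `F` is free of finite rank over `ℤ[C₂]` and `p` maps it to a finite module of odd order `e`,
then `F` and `ker p` have equally many homomorphisms to `N`. Reduction modulo `1 + g` sends `ker p`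
onto a subgroup `L` of `ℤ^ι` containing `e ℤ^ι`, hence free of full rank; every homomorphism
`ker p → N` factors through `L`, so both counts are `|N| ^ |ι|`. -/
theorem card_hom_ker_eq_card_hom
    {M F N : Type} [AddCommGroup M] [Module ZC₂ M] [Finite M] (hM : Odd (Nat.card M))
    [AddCommGroup N] [Module ZC₂ N] [Finite N]
    (hN : ∀ n : N, gC₂ • n = -n) {ι : Type} [Finite ι]
    [AddCommGroup F] [Module ZC₂ F] (b : Module.Basis ι ZC₂ F) (p : F →ₗ[ZC₂] M) :
    Finite (F →ₗ[ZC₂] N) ∧ Finite (LinearMap.ker p →ₗ[ZC₂] N) ∧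
    Nat.card (LinearMap.ker p →ₗ[ZC₂] N) = Nat.card (F →ₗ[ZC₂] N) := by
  have := Fintype.ofFinite ι
  set e := Nat.card M with he
  have he0 : e ≠ 0 := Nat.card_pos.ne'
  obtain ⟨k, hk⟩ := hM
  have hK (y : F) : e • y ∈ LinearMap.ker p := by
    rw [LinearMap.mem_ker, map_nsmul]; exact card_nsmul_eq_zero'
  -- reduction modulo `1 + g`, in coordinates
  let σ : F →ₗ[ℤ] (ι → ℤ) := AddMonoidHom.toIntLinearMap
    { toFun := fun x i => signZC₂ (b.repr x i)
      map_zero' := by ext; simp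
      map_add' := by intros; ext; simp }
  have hσ (x : F) (i : ι) : σ x i = signZC₂ (b.repr x i) := rfl
  have hσr (r : ZC₂) (x : F) : σ (r • x) = signZC₂ r • σ x := by
    ext i; simp [hσ]
  let τ : LinearMap.ker p →ₗ[ℤ] (ι → ℤ) :=
    σ ∘ₗ (LinearMap.ker p).subtype.toAddMonoidHom.toIntLinearMap
  have hτ (x : LinearMap.ker p) : τ x = σ x := rfl
  -- An element of `ker p` that is `0` modulo `1 + g` in `F` is so in `ker p`: this is where the
  -- order of `M` has to be odd. If `x = (1 + g) y` and `e = 2 k + 1`, then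
  -- `x = (1 + g) (e y - k x)`, because `(1 + g) x = 2 x`, and `e y - k x` lies in `ker p`.
  have hker (f : LinearMap.ker p →ₗ[ZC₂] N) (x : LinearMap.ker p) (hx : τ x = 0) : f x = 0 := by
    have hy : ∃ y : F, (x : F) = (1 + gC₂) • y := by
      have h (i : ι) : ∃ s, b.repr x i = (1 + gC₂) * s := by
        obtain ⟨s, hs⟩ := exists_eq_signZC₂_add (b.repr x i)
        refine ⟨s, hs.trans ?_⟩
        rw [← hσ, ← hτ, hx]; simp
      choose s hs using h
      refine ⟨b.equivFun.symm s, b.equivFun.injective ?_⟩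
      ext1 i
      rw [map_smul, LinearEquiv.apply_symm_apply]
      exact hs i
    obtain ⟨y, hy⟩ := hy
    have hz : e • y - k • (x : F) ∈ LinearMap.ker p :=
      sub_mem (hK y) (nsmul_mem x.2 k)
    have hxz : x = (1 + gC₂) • (⟨_, hz⟩ : LinearMap.ker p) := by
      apply Subtype.ext
      change (x : F) = (1 + gC₂) • (e • y - k • (x : F))
      rw [hy, hk]
      have h2 := gC₂_mul_self
      simp only [← Nat.cast_smul_eq_nsmul ZC₂, smul_smul, ← sub_smul]
      congr 1
      push_cast
      linear_combination (k : ZC₂) * h2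
    rw [hxz, map_smul, add_smul, one_smul, hN, add_neg_cancel]
  let L := LinearMap.range τ
  have hL : Module.finrank ℤ L = Fintype.card ι := by
    apply le_antisymm
    · exact (Submodule.finrank_le L).trans_eq (Module.finrank_fintype_fun_eq_card ℤ)
    · have hmem (v : ι → ℤ) : (e : ℤ) • v ∈ L := by
        refine ⟨⟨_, hK (b.equivFun.symm fun i => (v i : ZC₂))⟩, ?_⟩
        rw [hτ, map_nsmul, natCast_zsmul]
        congr 1
        ext i
        rw [hσ, ← b.equivFun_apply, LinearEquiv.apply_symm_apply, map_intCast, Int.cast_id]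
      have hinj : Function.Injective
          (((e : ℤ) • (LinearMap.id : (ι → ℤ) →ₗ[ℤ] (ι → ℤ))).codRestrict L hmem) := by
        rw [LinearMap.injective_codRestrict_iff]
        exact fun v w h => smul_right_injective (ι → ℤ)
          (show (e : ℤ) ≠ 0 by exact_mod_cast he0) h
      rw [← Module.finrank_fintype_fun_eq_card ℤ]
      exact LinearMap.finrank_le_finrank_of_injective hinj
  let eF : (ι → N) ≃ (F →ₗ[ZC₂] N) := (b.constr ℤ).toEquiv
  let eL : (Fin (Module.finrank ℤ L) → N) ≃ (L →ₗ[ℤ] N) :=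
    ((Module.finBasis ℤ L).constr ℤ).toEquiv
  have eK : Nonempty ((L →ₗ[ℤ] N) ≃ (LinearMap.ker p →ₗ[ZC₂] N)) := by
    refine ⟨Equiv.ofBijective (fun φ =>
      { toFun := fun x => φ (τ.rangeRestrict x)
        map_add' := by simp
        map_smul' := fun r x => ?_ }) ⟨?_, ?_⟩⟩
    · have : τ.rangeRestrict (r • x) = signZC₂ r • τ.rangeRestrict x :=
        Subtype.ext (hσr r x)
      rw [this, map_smul, RingHom.id_apply, smul_eq_signZC₂_smul hN]
    · intro φ ψ h
      ext ⟨_, x, rfl⟩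
      exact LinearMap.congr_fun h x
    · intro f
      obtain ⟨φ, hφ⟩ := exists_comp_eq_of_ker_le τ.surjective_rangeRestrict
        f.toAddMonoidHom.toIntLinearMap
        (fun x hx => hker f x (congrArg Subtype.val hx))
      exact ⟨φ, LinearMap.ext fun x => LinearMap.congr_fun hφ x⟩
  obtain ⟨eK⟩ := eK
  refine ⟨Finite.of_equiv _ eF, Finite.of_equiv _ (eL.trans eK), ?_⟩
  rw [← Nat.card_congr eF, ← Nat.card_congr (eL.trans eK), hL]
  exact Nat.card_congr ((Fintype.equivFin ι).symm.arrowCongr (Equiv.refl N))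

/-- Let `M` be a finite `ℤ[C₂]`-module of odd order and `N` a finite abelian group
regarded as a `ℤ[C₂]`-module with `g` acting by `-1`. Then `Hom_{ℤ[C₂]}(M, N)` and
`Ext¹_{ℤ[C₂]}(M, N)` are both finite of the same cardinality. -/
theorem card_hom_eq_card_ext_over_ZC₂
    (M : Type) [AddCommGroup M] [Module ZC₂ M] [Finite M] (hM : Odd (Nat.card M))
    (N : Type) [AddCommGroup N] [Module ZC₂ N] [Finite N]
    (hN : ∀ n : N, gC₂ • n = -n) :
    Finite (M →ₗ[ZC₂] N) ∧
    Finite ↥(((Ext ZC₂ (ModuleCat ZC₂) 1).obj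
        (Opposite.op (ModuleCat.of ZC₂ M))).obj (ModuleCat.of ZC₂ N)) ∧
    Nat.card (M →ₗ[ZC₂] N)
      = Nat.card ↥(((Ext ZC₂ (ModuleCat ZC₂) 1).obj
          (Opposite.op (ModuleCat.of ZC₂ M))).obj (ModuleCat.of ZC₂ N)) := by
  have := Fintype.ofFinite M
  let p : (M → ZC₂) →ₗ[ZC₂] M := Fintype.linearCombination ZC₂ (id : M → M)
  have hp : Function.Surjective p := fun m => by
    classical exact ⟨Pi.single m 1, by simp [p, Fintype.linearCombination_apply_single]⟩
  have : CategoryTheory.Epi (ModuleCat.ofHom p) := (ModuleCat.epi_iff_surjective _).2 hp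
  have : CategoryTheory.Projective (ModuleCat.of ZC₂ (M → ZC₂)) :=
    ModuleCat.projective_of_free (Pi.basisFun ZC₂ M)
  obtain ⟨P, ⟨i⟩⟩ := exists_projectiveResolution_X_zero_iso (ModuleCat.ofHom p)
  let π : P.complex.X 0 →ₗ[ZC₂] M := (P.π.f 0).hom
  obtain ⟨_, _, hcard⟩ := card_hom_ker_eq_card_hom hM hN
    ((Pi.basisFun ZC₂ M).map i.toLinearEquiv.symm) π
  obtain ⟨h₁, h₂⟩ := card_ext_mul (N := ModuleCat.of ZC₂ N) P π rfl
  have : Finite (M →ₗ[ZC₂] N) := Finite.of_injective _ DFunLike.coe_injective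
  refine ⟨this, h₁, ?_⟩
  have hpos : 0 < Nat.card (P.complex.X 0 →ₗ[ZC₂] N) := Nat.card_pos
  refine Nat.eq_of_mul_eq_mul_left hpos ?_
  rw [← hcard]
  refine Eq.trans h₂.symm ?_
  rw [mul_comm, ← hcard]
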